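/- arXiv:1009.4517 — 2 statements merged into one kernel-verified Lean document; each statement's English description precedes it below -/
import Mathlib

section
/- Let P be a simple polygon and let p, q be two points in the closed region bounded by P. The shortest path from p to q inside P bends only at reflex vertices of P. -/
/-- The Euclidean plane. -/
abbrev Pt := EuclideanSpace ℝ (Fin 2)

/-- A simple polygon, given by its cyclic sequence of vertices; consecutive
vertices are joined by straight edges, and two distinct edges meet only in
shared endpoints. -/
structure SimplePolygon where
  n : ℕ
  three_le : 3 ≤ n
  vtx : ZMod n → Pt
  inj : Function.Injective vtx
  edges_meet : ∀ i j : ZMod n, i ≠ j →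
    segment ℝ (vtx i) (vtx (i + 1)) ∩ segment ℝ (vtx j) (vtx (j + 1)) ⊆
      ({vtx i, vtx (i + 1)} : Set Pt) ∩ ({vtx j, vtx (j + 1)} : Set Pt)

namespace SimplePolygon

/-- The boundary of the polygon: the union of its edges. -/
def boundary (P : SimplePolygon) : Set Pt :=
  ⋃ i : ZMod P.n, segment ℝ (P.vtx i) (P.vtx (i + 1))

/-- The closed region bounded by the polygon: the boundary together with the
bounded connected components of its complement. -/
def region (P : SimplePolygon) : Set Pt :=
  P.boundary ∪
    {x : Pt | x ∉ P.boundary ∧ Bornology.IsBounded (connectedComponentIn P.boundaryᶜ x)}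

/-- `x` is a reflex vertex of `P`: it is a vertex at which the region is
locally non-convex (interior angle exceeding `π`). -/
def IsReflexVertex (P : SimplePolygon) (x : Pt) : Prop :=
  (∃ i : ZMod P.n, x = P.vtx i) ∧ ∀ ε > (0 : ℝ), ¬ Convex ℝ (Metric.ball x ε ∩ P.region)

end SimplePolygon

/-- The length of the polygonal path through the points `f 0, …, f k`. -/
noncomputable def polyLength {k : ℕ} (f : Fin (k + 1) → Pt) : ℝ :=
  ∑ i : Fin k, dist (f i.castSucc) (f i.succ)

/-- The point set (track) of the polygonal path through `f 0, …, f k`. -/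
def polyTrack {k : ℕ} (f : Fin (k + 1) → Pt) : Set Pt :=
  ⋃ i : Fin k, segment ℝ (f i.castSucc) (f i.succ)

/-- `f` is a geodesic (shortest polygonal path) from `p` to `q` inside the
region of the polygon `P`. -/
def IsGeodesic (P : SimplePolygon) (p q : Pt) {k : ℕ} (f : Fin (k + 1) → Pt) : Prop :=
  f 0 = p ∧ f (Fin.last k) = q ∧ polyTrack f ⊆ P.region ∧
    ∀ (k' : ℕ) (g : Fin (k' + 1) → Pt), g 0 = p → g (Fin.last k') = q →
      polyTrack g ⊆ P.region → polyLength f ≤ polyLength g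

namespace SimplePolygon

theorem dichotomy (P : SimplePolygon) (T : Set Pt) (hT : IsPreconnected T)
    (hd : ∀ y ∈ T, y ∉ P.boundary) : (∀ y ∈ T, y ∈ P.region) ∨ (∀ y ∈ T, y ∉ P.region) := by
  by_cases h : ∃ z ∈ T, z ∈ P.region
  · left
    obtain ⟨z, hz, hzr⟩ := h
    intro y hy
    rcases hzr with hzb | ⟨_, hzb⟩
    · exact absurd hzb (hd z hz)
    · right
      refine ⟨hd y hy, ?_⟩
      have hsub : T ⊆ connectedComponentIn P.boundaryᶜ z :=
        hT.subset_connectedComponentIn hz (fun w hw => hd w hw)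
      rw [← connectedComponentIn_eq (hsub hy)]
      exact hzb
  · right
    push Not at h
    exact h

theorem closed_edges (P : SimplePolygon) (S : Set (ZMod P.n)) :
    IsClosed (⋃ i ∈ S, segment ℝ (P.vtx i) (P.vtx (i + 1))) := by
  have : NeZero P.n := ⟨by have := P.three_le; omega⟩
  refine Set.Finite.isClosed_biUnion (Set.toFinite S) (fun i _ => ?_)
  rw [segment_eq_image_lineMap]
  exact (isCompact_Icc.image (by fun_prop)).isClosed

/-- The cross product with `v`, as a linear map. -/
noncomputable def cross (v : Pt) : Pt →ₗ[ℝ] ℝ where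
  toFun y := y 0 * v 1 - y 1 * v 0
  map_add' y z := by simp; ring
  map_smul' c y := by simp; ring

theorem cross_apply (v y : Pt) : cross v y = y 0 * v 1 - y 1 * v 0 := rfl

theorem cross_eq_zero (v y : Pt) (hv : v ≠ 0) (h : cross v y = 0) : ∃ t : ℝ, y = t • v := by
  rw [cross_apply] at h
  by_cases h0 : v 0 = 0
  · have h1 : v 1 ≠ 0 := by
      intro h1
      apply hv
      ext j
      fin_cases j <;> simp [h0, h1]
    refine ⟨y 1 / v 1, ?_⟩
    ext j
    fin_cases j
    · simp [h0] at h ⊢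
      tauto
    · simp
      field_simp
  · refine ⟨y 0 / v 0, ?_⟩
    ext j
    fin_cases j
    · simp
      field_simp
    · simp
      field_simp
      linarith

theorem locally_convex (P : SimplePolygon) (x : Pt) (hx : ¬ ∃ i : ZMod P.n, x = P.vtx i) :
    ∃ ε > (0 : ℝ), Convex ℝ (Metric.ball x ε ∩ P.region) := by
  by_cases hb : x ∈ P.boundary
  · obtain ⟨i, hi⟩ := Set.mem_iUnion.1 hb
    have hi2 := hi
    rw [segment_eq_image'] at hi2
    obtain ⟨s, ⟨hs0, hs1⟩, hs⟩ := hi2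
    set a := P.vtx i with ha
    set b := P.vtx (i + 1) with hbdef
    set v := b - a with hv
    simp only at hs
    have hs0' : 0 < s := by
      rcases hs0.lt_or_eq with h | h
      · exact h
      · exact absurd ⟨i, by rw [← hs, ← h]; simp [ha]⟩ hx
    have hs1' : s < 1 := by
      rcases hs1.lt_or_eq with h | h
      · exact h
      · exact absurd ⟨i + 1, by rw [← hs, h, hv]; simp [hbdef]⟩ hx
    have hv0 : v ≠ 0 := by
      intro h
      exact hx ⟨i, by rw [← hs, h]; simp [ha]⟩
    have hvn : 0 < ‖v‖ := norm_pos_iff.2 hv0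
    have hother : x ∉ ⋃ j ∈ {j | j ≠ i}, segment ℝ (P.vtx j) (P.vtx (j + 1)) := by
      intro h
      simp only [Set.mem_iUnion] at h
      obtain ⟨j, hj, hxj⟩ := h
      have := (P.edges_meet i j (Ne.symm hj) ⟨hi, hxj⟩).1
      rcases this with h | h
      · exact hx ⟨i, h⟩
      · exact hx ⟨i + 1, h⟩
    obtain ⟨ε₁, hε₁, hball⟩ := Metric.isOpen_iff.1 (P.closed_edges {j | j ≠ i}).isOpen_compl x hother
    set ε := min ε₁ (min (s * ‖v‖) ((1 - s) * ‖v‖)) with hε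
    have hεpos : 0 < ε := by
      have : 0 < 1 - s := by linarith
      simp only [hε, lt_min_iff]
      exact ⟨hε₁, by positivity, by positivity⟩
    -- on the ball, the boundary is the zero set of the cross product
    have hzero : ∀ y ∈ Metric.ball x ε, (y ∈ P.boundary ↔ cross v y = cross v x) := by
      intro y hy
      rw [Metric.mem_ball, dist_eq_norm] at hy
      constructor
      · intro hyb
        obtain ⟨j, hj⟩ := Set.mem_iUnion.1 hyb
        by_cases hji : j = i
        · subst hji
          rw [segment_eq_image'] at hj
          obtain ⟨r, _, hr⟩ := hj
          rw [← hs, ← hr]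
          simp only [map_add, map_smul]
          have : cross v v = 0 := by rw [cross_apply]; ring
          simp [← ha, ← hbdef, ← hv, this]
        · exfalso
          refine hball (Metric.mem_ball.2 (?_ : dist y x < ε₁)) ?_
          · rw [dist_eq_norm]
            exact hy.trans_le (min_le_left _ _)
          · simp only [Set.mem_iUnion]
            exact ⟨j, hji, hj⟩
      · intro h
        obtain ⟨t, ht⟩ := cross_eq_zero v (y - x) hv0 (by rw [map_sub, h, sub_self])
        rw [ht, norm_smul, Real.norm_eq_abs] at hy
        have h1 : |t| < s := by
          have := hy.trans_le ((min_le_right _ _).trans (min_le_left _ _))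
          exact lt_of_mul_lt_mul_right this hvn.le
        have h2 : |t| < 1 - s := by
          have := hy.trans_le ((min_le_right _ _).trans (min_le_right _ _))
          exact lt_of_mul_lt_mul_right this hvn.le
        rw [abs_lt] at h1 h2
        refine Set.mem_iUnion.2 ⟨i, ?_⟩
        rw [segment_eq_image']
        refine ⟨s + t, ⟨by linarith, by linarith⟩, ?_⟩
        have : y = x + t • v := by rw [← ht]; abel
        simp only
        rw [this, ← hs, add_smul, add_assoc]
    have hcb : Convex ℝ (Metric.ball x ε) := convex_ball x ε
    have hlin : IsLinearMap ℝ (cross v) := (cross v).isLinear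
    have hpos := P.dichotomy (Metric.ball x ε ∩ {y | cross v x < cross v y})
      (hcb.inter (convex_halfSpace_gt hlin _)).isPreconnected (by
        rintro y ⟨hy, hy2⟩ hyb
        exact hy2.ne' ((hzero y hy).1 hyb))
    have hneg := P.dichotomy (Metric.ball x ε ∩ {y | cross v y < cross v x})
      (hcb.inter (convex_halfSpace_lt hlin _)).isPreconnected (by
        rintro y ⟨hy, hy2⟩ hyb
        exact hy2.ne ((hzero y hy).1 hyb))
    have hmid : ∀ y ∈ Metric.ball x ε, cross v y = cross v x → y ∈ P.region :=
      fun y hy h => Or.inl ((hzero y hy).2 h)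
    refine ⟨ε, hεpos, ?_⟩
    rcases hpos with hpos | hpos <;> rcases hneg with hneg | hneg
    · convert hcb using 1
      ext y
      refine ⟨fun h => h.1, fun h => ⟨h, ?_⟩⟩
      rcases lt_trichotomy (cross v y) (cross v x) with h' | h' | h'
      · exact hneg y ⟨h, h'⟩
      · exact hmid y h h'
      · exact hpos y ⟨h, h'⟩
    · convert hcb.inter (convex_halfSpace_ge hlin (cross v x)) using 1
      ext y
      refine ⟨fun h => ⟨h.1, ?_⟩, fun h => ⟨h.1, ?_⟩⟩
      · by_contra h'
        exact hneg y ⟨h.1, show cross v y < cross v x from lt_of_not_ge (fun hh => h' hh)⟩ h.2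
      · rcases (show cross v x ≤ cross v y from h.2).lt_or_eq with h' | h'
        · exact hpos y ⟨h.1, h'⟩
        · exact hmid y h.1 h'.symm
    · convert hcb.inter (convex_halfSpace_le hlin (cross v x)) using 1
      ext y
      refine ⟨fun h => ⟨h.1, ?_⟩, fun h => ⟨h.1, ?_⟩⟩
      · by_contra h'
        exact hpos y ⟨h.1, show cross v x < cross v y from lt_of_not_ge (fun hh => h' hh)⟩ h.2
      · rcases (show cross v y ≤ cross v x from h.2).lt_or_eq with h' | h'
        · exact hneg y ⟨h.1, h'⟩
        · exact hmid y h.1 h'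
    · convert hcb.inter (convex_hyperplane hlin (cross v x)) using 1
      ext y
      refine ⟨fun h => ⟨h.1, ?_⟩, fun h => ⟨h.1, hmid y h.1 h.2⟩⟩
      rcases lt_trichotomy (cross v y) (cross v x) with h' | h' | h'
      · exact absurd h.2 (hneg y ⟨h.1, h'⟩)
      · exact h'
      · exact absurd h.2 (hpos y ⟨h.1, h'⟩)
  · have hcl : IsClosed P.boundary := by
      have := P.closed_edges Set.univ
      simpa [boundary] using this
    obtain ⟨ε, hε, hball⟩ := Metric.isOpen_iff.1 hcl.isOpen_compl x hb
    refine ⟨ε, hε, ?_⟩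
    rcases P.dichotomy (Metric.ball x ε) (convex_ball x ε).isPreconnected
      (fun y hy => hball hy) with h | h
    · rw [Set.inter_eq_left.2 h]
      exact convex_ball x ε
    · rw [(Set.eq_empty_iff_forall_notMem (s := Metric.ball x ε ∩ P.region)).2
        (fun y hy => h y hy.1 hy.2)]
      exact convex_empty

end SimplePolygon

/-- Extension of a path to all natural indices. -/
def pathExt {k : ℕ} (f : Fin (k + 1) → Pt) (j : ℕ) : Pt := f ⟨min j k, by omega⟩

theorem pathExt_eq {k : ℕ} (f : Fin (k + 1) → Pt) (j : ℕ) (h : j < k + 1) :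
    pathExt f j = f ⟨j, h⟩ := by
  unfold pathExt
  congr 2
  omega

theorem polyLength_eq {k : ℕ} (f : Fin (k + 1) → Pt) :
    polyLength f = ∑ j ∈ Finset.range k, dist (pathExt f j) (pathExt f (j + 1)) := by
  rw [Finset.sum_range]
  unfold polyLength
  refine Finset.sum_congr rfl (fun j _ => ?_)
  rw [pathExt_eq f j (by omega), pathExt_eq f (j + 1) (by omega)]
  rfl

theorem shortcut (P : SimplePolygon) (p q : Pt) {k : ℕ} (f : Fin (k + 1) → Pt)
    (hf : IsGeodesic P p q f) (u m : ℕ) (hk : k = u + 2 + m) (ε : ℝ) (hε : 0 < ε)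
    (hc : Convex ℝ (Metric.ball (pathExt f (u + 1)) ε ∩ P.region)) :
    pathExt f (u + 1) ∈ segment ℝ (pathExt f u) (pathExt f (u + 2)) := by
  by_contra hx
  obtain ⟨h0, hl, htr, hmin⟩ := hf
  set F := pathExt f with hF
  have hseg : ∀ j < k, segment ℝ (F j) (F (j + 1)) ⊆ P.region := by
    intro j hj
    refine subset_trans ?_ htr
    rw [hF, pathExt_eq f j (by omega), pathExt_eq f (j + 1) (by omega)]
    exact Set.subset_iUnion (fun i : Fin k => segment ℝ (f i.castSucc) (f i.succ)) ⟨j, hj⟩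
  have hlt : dist (F u) (F (u + 2)) < dist (F u) (F (u + 1)) + dist (F (u + 1)) (F (u + 2)) := by
    refine lt_of_le_of_ne (dist_triangle _ _ _) (fun h => hx ?_)
    rw [mem_segment_iff_wbtw]
    exact dist_add_dist_eq_iff.1 h.symm
  set x := F (u + 1) with hxdef
  set A := F u with hA
  set B := F (u + 2) with hB
  set t : ℝ := ε / (ε + dist A x + dist x B) with ht
  have hdA : 0 ≤ dist A x := dist_nonneg
  have hdB : 0 ≤ dist x B := dist_nonneg
  have hden : 0 < ε + dist A x + dist x B := by positivity
  have ht0 : 0 < t := by positivity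
  have ht1 : t ≤ 1 := by rw [ht, div_le_one hden]; linarith
  have htε : t * (ε + dist A x + dist x B) = ε := by rw [ht]; field_simp
  have hpos : 0 < dist A x + dist x B := lt_of_le_of_lt dist_nonneg hlt
  have htA : t * dist A x < ε := by
    have h1 : 0 < t * ε := by positivity
    have h2 : 0 ≤ t * dist x B := by positivity
    linarith [htε, mul_add t (ε + dist A x) (dist x B), mul_add t ε (dist A x)]
  have htB : t * dist x B < ε := by
    have h1 : 0 < t * ε := by positivity
    have h2 : 0 ≤ t * dist A x := by positivity
    linarith [htε, mul_add t (ε + dist A x) (dist x B), mul_add t ε (dist A x)]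
  set a := AffineMap.lineMap x A t with ha
  set b := AffineMap.lineMap x B t with hb
  have hat : a ∈ segment ℝ A x := by
    rw [segment_symm, segment_eq_image_lineMap]
    exact ⟨t, ⟨ht0.le, ht1⟩, rfl⟩
  have hbt : b ∈ segment ℝ x B := by
    rw [segment_eq_image_lineMap]
    exact ⟨t, ⟨ht0.le, ht1⟩, rfl⟩
  have hAa : dist A a = (1 - t) * dist A x := by
    rw [ha, dist_comm, dist_lineMap_right, Real.norm_of_nonneg (by linarith), dist_comm x A]
  have hbB : dist b B = (1 - t) * dist x B := by
    rw [hb, dist_lineMap_right, Real.norm_of_nonneg (by linarith)]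
  have hab : dist a b = t * dist A B := by
    have : a - b = t • (A - B) := by
      rw [ha, hb, AffineMap.lineMap_apply_module, AffineMap.lineMap_apply_module, smul_sub]
      abel
    rw [dist_eq_norm, this, norm_smul, Real.norm_of_nonneg ht0.le, dist_eq_norm]
  have hAx : segment ℝ A x ⊆ P.region := hseg u (by omega)
  have hxB : segment ℝ x B ⊆ P.region := hseg (u + 1) (by omega)
  have habr : segment ℝ a b ⊆ P.region := by
    refine subset_trans (hc.segment_subset ⟨?_, hAx hat⟩ ⟨?_, hxB hbt⟩) Set.inter_subset_right
    · rw [Metric.mem_ball, ha, dist_lineMap_left, Real.norm_of_nonneg ht0.le, dist_comm]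
      exact htA
    · rw [Metric.mem_ball, hb, dist_lineMap_left, Real.norm_of_nonneg ht0.le]
      exact htB
  have hAar : segment ℝ A a ⊆ P.region :=
    subset_trans ((convex_segment A x).segment_subset (left_mem_segment ℝ A x) hat) hAx
  have hbBr : segment ℝ b B ⊆ P.region :=
    subset_trans ((convex_segment x B).segment_subset hbt (right_mem_segment ℝ x B)) hxB
  let G : ℕ → Pt := fun j => if j ≤ u then F j else if j = u + 1 then a
    else if j = u + 2 then b else F (j - 1)
  have G1 : ∀ j ≤ u, G j = F j := fun j hj => by simp only [G]; rw [if_pos hj]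
  have G2 : G (u + 1) = a := by simp [G]
  have G3 : G (u + 2) = b := by simp [G]
  have G4 : ∀ j, G (u + 3 + j) = F (u + 2 + j) := fun j => by
    simp only [G]
    rw [if_neg (by omega), if_neg (by omega), if_neg (by omega)]
    congr 1
    omega
  have hle := hmin (k + 1) (fun j => G j.val) (by
      show G 0 = p
      rw [G1 0 (by omega), ← h0, hF, pathExt_eq f 0 (by omega)]
      rfl) (by
      show G (k + 1) = q
      rw [show k + 1 = u + 3 + m by omega, G4, ← hk, ← hl, hF, pathExt_eq f k (by omega)]
      rfl) (by
      refine Set.iUnion_subset (fun j => ?_)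
      show segment ℝ (G j.val) (G (j.val + 1)) ⊆ P.region
      obtain ⟨j, hj⟩ := j
      show segment ℝ (G j) (G (j + 1)) ⊆ P.region
      rcases lt_or_ge j u with h | h
      · rw [G1 j (by omega), G1 (j + 1) (by omega)]
        exact hseg j (by omega)
      · obtain ⟨r, rfl⟩ := Nat.exists_eq_add_of_le h
        rcases r with _ | _ | _ | r
        · rw [show u + 0 = u from rfl, G1 u le_rfl, G2]
          exact hAar
        · show segment ℝ (G (u + 1)) (G (u + 2)) ⊆ P.region
          rw [G2, G3]
          exact habr
        · show segment ℝ (G (u + 2)) (G (u + 3 + 0)) ⊆ P.region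
          rw [G3, G4]
          exact hbBr
        · rw [show u + (r + 1 + 1 + 1) = u + 3 + r by omega,
            show u + 3 + r + 1 = u + 3 + (r + 1) by omega, G4, G4]
          exact hseg (u + 2 + r) (by omega))
  have hGlen : polyLength (fun j : Fin (k + 1 + 1) => G j.val) =
      ∑ j ∈ Finset.range (k + 1), dist (G j) (G (j + 1)) := by
    rw [Finset.sum_range]
    rfl
  rw [hGlen, polyLength_eq, ← hF, show k + 1 = u + 3 + m by omega, hk,
    Finset.sum_range_add _ (u + 3) m, Finset.sum_range_add _ (u + 2) m,
    Finset.sum_range_succ _ (u + 2), Finset.sum_range_succ _ (u + 1), Finset.sum_range_succ _ u,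
    Finset.sum_range_succ _ (u + 1), Finset.sum_range_succ _ u] at hle
  have e1 : ∑ j ∈ Finset.range u, dist (G j) (G (j + 1)) =
      ∑ j ∈ Finset.range u, dist (F j) (F (j + 1)) := by
    refine Finset.sum_congr rfl (fun j hj => ?_)
    have := Finset.mem_range.1 hj
    rw [G1 j (by omega), G1 (j + 1) (by omega)]
  have e2 : ∑ j ∈ Finset.range m, dist (G (u + 3 + j)) (G (u + 3 + j + 1)) =
      ∑ j ∈ Finset.range m, dist (F (u + 2 + j)) (F (u + 2 + j + 1)) := by
    refine Finset.sum_congr rfl (fun j _ => ?_)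
    rw [G4, show u + 3 + j + 1 = u + 3 + (j + 1) by omega, G4]
    rfl
  have e3 : dist (G u) (G (u + 1)) = (1 - t) * dist A x := by rw [G1 u le_rfl, G2, ← hAa]
  have e4 : dist (G (u + 1)) (G (u + 1 + 1)) = t * dist A B := by
    rw [← hab, G2]
    show dist a (G (u + 2)) = _
    rw [G3]
  have e5 : dist (G (u + 2)) (G (u + 2 + 1)) = (1 - t) * dist x B := by
    rw [← hbB, G3]
    show dist b (G (u + 3 + 0)) = _
    rw [G4]
  rw [e1, e2, e3, e4, e5] at hle
  have e6 : dist (F u) (F (u + 1)) = dist A x := rfl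
  have e7 : dist (F (u + 1)) (F (u + 1 + 1)) = dist x B := rfl
  rw [e6, e7] at hle
  have := mul_lt_mul_of_pos_left hlt ht0
  linarith

/-- The shortest path between two points inside a simple polygon bends only at
reflex vertices of the polygon: every interior breakpoint of the geodesic is a
reflex vertex. -/
theorem geodesic_bends_only_at_reflex_vertices (P : SimplePolygon) (p q : Pt)
    (hp : p ∈ P.region) (hq : q ∈ P.region) {k : ℕ} (f : Fin (k + 1) → Pt)
    (hf : IsGeodesic P p q f) :
    ∀ (i : Fin (k + 1)) (h0 : 0 < i.val) (hk : i.val < k),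
      f i ∉ segment ℝ (f ⟨i.val - 1, by omega⟩) (f ⟨i.val + 1, by omega⟩) →
      P.IsReflexVertex (f i) := by
  intro i h0 hk hbend
  have hnc : ∀ ε > (0 : ℝ), ¬ Convex ℝ (Metric.ball (f i) ε ∩ P.region) := by
    intro ε hε hc
    apply hbend
    obtain ⟨i, hi⟩ := i
    obtain ⟨u, rfl⟩ : ∃ u, i = u + 1 := ⟨i - 1, by simp at h0; omega⟩
    obtain ⟨m, hm⟩ : ∃ m, k = u + 2 + m := ⟨k - (u + 2), by simp at hk; omega⟩
    have h := shortcut P p q f hf u m hm ε hε (by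
      rw [pathExt_eq f (u + 1) hi]
      exact hc)
    rw [pathExt_eq f (u + 1) hi, pathExt_eq f u (by omega),
      pathExt_eq f (u + 2) (by omega)] at h
    exact h
  refine ⟨?_, hnc⟩
  by_contra hv
  obtain ⟨ε, hε, hc⟩ := P.locally_convex (f i) hv
  exact hnc ε hε hc
end

section
/- Let T be a tree each of whose internal nodes is labeled P or Q, with leaf set U, and let S ⊆ U. The projection of T to S (delete leaves not in S, recursively delete empty internal nodes, and contract internal nodes with a single child) represents exactly the restrictions to S of the linear orders represented by T: a permutation of S is a leaf-order of the projection iff it is the restriction to S of some leaf-order of T. -/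
/-- A PQ-tree: leaves carry elements, internal nodes are P-nodes or Q-nodes. -/
inductive PQTree (α : Type*) where
  | leaf : α → PQTree α
  | P : List (PQTree α) → PQTree α
  | Q : List (PQTree α) → PQTree α

namespace PQTree

/-- The leaves of a PQ-tree, in the tree's current (in-order) arrangement. -/
def leaves {α : Type*} : PQTree α → List α
  | .leaf a => [a]
  | .P cs => cs.attach.flatMap fun c => c.1.leaves
  | .Q cs => cs.attach.flatMap fun c => c.1.leaves
  decreasing_by all_goals (have := List.sizeOf_lt_of_mem c.2; simp only [PQTree.P.sizeOf_spec, PQTree.Q.sizeOf_spec]; omega)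

/-- The projection of a PQ-tree to a subset `S` of its leaves: delete all
leaves not in `S`, recursively delete internal nodes with no children, and
contract internal nodes with a single child.  Returns `none` if nothing
remains. -/
def proj {α : Type*} (S : Set α) [DecidablePred (· ∈ S)] : PQTree α → Option (PQTree α)
  | .leaf a => if a ∈ S then some (.leaf a) else none
  | .P cs =>
    match cs.attach.filterMap (fun c => c.1.proj S) with
    | [] => none
    | [t] => some t
    | ts => some (.P ts)
  | .Q cs =>
    match cs.attach.filterMap (fun c => c.1.proj S) with
    | [] => none
    | [t] => some t
    | ts => some (.Q ts)
  decreasing_by all_goals (have := List.sizeOf_lt_of_mem c.2; simp only [PQTree.P.sizeOf_spec, PQTree.Q.sizeOf_spec]; omega)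

end PQTree

/-- `IsLeafOrder T l`: `l` is a leaf-order of some PQ-tree equivalent to `T`
(children of P-nodes may be permuted arbitrarily; children of Q-nodes may be
reversed). -/
inductive IsLeafOrder {α : Type*} : PQTree α → List α → Prop
  | leaf (a : α) : IsLeafOrder (.leaf a) [a]
  | pnode (cs cs' : List (PQTree α)) (ls : List (List α)) :
      cs'.Perm cs → List.Forall₂ IsLeafOrder cs' ls → IsLeafOrder (.P cs) ls.flatten
  | qnode (cs : List (PQTree α)) (ls : List (List α)) :
      List.Forall₂ IsLeafOrder cs ls → IsLeafOrder (.Q cs) ls.flatten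
  | qnodeRev (cs : List (PQTree α)) (ls : List (List α)) :
      List.Forall₂ IsLeafOrder cs.reverse ls → IsLeafOrder (.Q cs) ls.flatten


/-- `l` is a concatenation of leaf-orders of the trees in the list. -/
def ForestOrder {α : Type*} (cs : List (PQTree α)) (l : List α) : Prop :=
  ∃ ls, List.Forall₂ IsLeafOrder cs ls ∧ l = ls.flatten

/-- Leaf orders of an optional tree. -/
def OptOrder {α : Type*} (o : Option (PQTree α)) (l : List α) : Prop :=
  o.elim (l = []) (fun T' => IsLeafOrder T' l)

theorem forestOrder_nil {α : Type*} (l : List α) : ForestOrder [] l ↔ l = [] := by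
  simp [ForestOrder]

theorem forestOrder_cons {α : Type*} (c : PQTree α) (cs : List (PQTree α)) (l : List α) :
    ForestOrder (c :: cs) l ↔ ∃ a b, IsLeafOrder c a ∧ ForestOrder cs b ∧ l = a ++ b := by
  constructor
  · rintro ⟨ls, h, rfl⟩
    cases h with
    | cons h1 h2 => exact ⟨_, _, h1, ⟨_, h2, rfl⟩, by simp⟩
  · rintro ⟨a, b, h1, ⟨ls, h2, rfl⟩, rfl⟩
    exact ⟨a :: ls, .cons h1 h2, by simp⟩

theorem forestOrder_single {α : Type*} (c : PQTree α) (l : List α) :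
    ForestOrder [c] l ↔ IsLeafOrder c l := by
  simp [forestOrder_cons, forestOrder_nil]

theorem isLeafOrder_P {α : Type*} (cs : List (PQTree α)) (l : List α) :
    IsLeafOrder (.P cs) l ↔ ∃ cs', cs'.Perm cs ∧ ForestOrder cs' l := by
  constructor
  · intro h
    cases h with
    | pnode _ cs' ls hp h => exact ⟨cs', hp, ls, h, rfl⟩
  · rintro ⟨cs', hp, ls, h, rfl⟩
    exact .pnode _ _ _ hp h

theorem isLeafOrder_Q {α : Type*} (cs : List (PQTree α)) (l : List α) :
    IsLeafOrder (.Q cs) l ↔ ForestOrder cs l ∨ ForestOrder cs.reverse l := by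
  constructor
  · intro h
    cases h with
    | qnode _ ls h => exact .inl ⟨ls, h, rfl⟩
    | qnodeRev _ ls h => exact .inr ⟨ls, h, rfl⟩
  · rintro (⟨ls, h, rfl⟩ | ⟨ls, h, rfl⟩)
    · exact .qnode _ _ h
    · exact .qnodeRev _ _ h

theorem exists_perm_filterMap {β γ : Type*} (f : β → Option γ) (cs : List β) :
    ∀ ts : List γ, ts.Perm (cs.filterMap f) →
      ∃ cs' : List β, cs'.Perm cs ∧ cs'.filterMap f = ts := by
  induction cs with
  | nil => intro ts h; exact ⟨[], .refl _, by simpa using h.symm⟩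
  | cons c cs ih =>
    intro ts h
    cases hc : f c with
    | none =>
      rw [List.filterMap_cons_none hc] at h
      obtain ⟨cs', hp, rfl⟩ := ih ts h
      exact ⟨c :: cs', hp.cons c, List.filterMap_cons_none hc⟩
    | some t =>
      rw [List.filterMap_cons_some hc] at h
      have hm : t ∈ ts := h.symm.subset (by simp)
      obtain ⟨a, b, rfl⟩ := List.append_of_mem hm
      have h' := (List.perm_middle.symm.trans h).cons_inv
      obtain ⟨cs', hp, he⟩ := ih _ h'
      obtain ⟨x, y, rfl, rfl, rfl⟩ := List.filterMap_eq_append_iff.1 he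
      exact ⟨x ++ c :: y, List.perm_middle.trans (hp.cons c), by simp [hc]⟩

theorem proj_P_order {α : Type*} (S : Set α) [DecidablePred (· ∈ S)] (cs : List (PQTree α))
    (l : List α) : OptOrder ((PQTree.P cs).proj S) l ↔
      ∃ ts, ts.Perm (cs.filterMap (PQTree.proj S)) ∧ ForestOrder ts l := by
  have e : cs.attach.filterMap (fun c => c.1.proj S) = cs.filterMap (PQTree.proj S) := by
    simp
  rw [PQTree.proj, e]
  split <;> rename_i h
  · simp [h, OptOrder, forestOrder_nil]
  · simp [h, OptOrder, forestOrder_single]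
  · simp only [OptOrder, Option.elim_some, isLeafOrder_P]

theorem proj_Q_order {α : Type*} (S : Set α) [DecidablePred (· ∈ S)] (cs : List (PQTree α))
    (l : List α) : OptOrder ((PQTree.Q cs).proj S) l ↔
      ForestOrder (cs.filterMap (PQTree.proj S)) l ∨
      ForestOrder (cs.filterMap (PQTree.proj S)).reverse l := by
  have e : cs.attach.filterMap (fun c => c.1.proj S) = cs.filterMap (PQTree.proj S) := by
    simp
  rw [PQTree.proj, e]
  split <;> rename_i h
  · simp [h, OptOrder, forestOrder_nil]
  · simp [h, OptOrder, forestOrder_single]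
  · simp only [OptOrder, Option.elim_some, isLeafOrder_Q]

theorem forest_proj {α : Type*} (S : Set α) [DecidablePred (· ∈ S)] (cs : List (PQTree α))
    (H : ∀ c ∈ cs, ∀ l, (∃ L : List α, IsLeafOrder c L ∧ l = L.filter fun a => decide (a ∈ S)) ↔
      OptOrder (c.proj S) l) :
    ∀ l, (∃ L : List α, ForestOrder cs L ∧ l = L.filter fun a => decide (a ∈ S)) ↔
      ForestOrder (cs.filterMap (PQTree.proj S)) l := by
  induction cs with
  | nil => intro l; simp [forestOrder_nil]
  | cons c cs ih =>
    intro l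
    have ih' := ih (fun d hd => H d (List.mem_cons_of_mem _ hd))
    have hc := H c (by simp)
    have key : (∃ L : List α, ForestOrder (c :: cs) L ∧ l = L.filter fun a => decide (a ∈ S)) ↔
        ∃ a b, OptOrder (c.proj S) a ∧ ForestOrder (cs.filterMap (PQTree.proj S)) b ∧
          l = a ++ b := by
      constructor
      · rintro ⟨L, hL, rfl⟩
        obtain ⟨a, b, ha, hb, rfl⟩ := (forestOrder_cons _ _ _).1 hL
        exact ⟨_, _, (hc _).1 ⟨a, ha, rfl⟩, (ih' _).1 ⟨b, hb, rfl⟩, by simp⟩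
      · rintro ⟨a, b, ha, hb, rfl⟩
        obtain ⟨A, hA, rfl⟩ := (hc _).2 ha
        obtain ⟨B, hB, rfl⟩ := (ih' _).2 hb
        exact ⟨A ++ B, (forestOrder_cons _ _ _).2 ⟨A, B, hA, hB, rfl⟩, by simp⟩
    rw [key]
    cases h : c.proj S with
    | none => simp [h, OptOrder]
    | some t => simp [h, OptOrder, forestOrder_cons]

theorem proj_main {α : Type*} (S : Set α) [DecidablePred (· ∈ S)] : (T : PQTree α) →
    ∀ l, (∃ L : List α, IsLeafOrder T L ∧ l = L.filter fun a => decide (a ∈ S)) ↔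
      OptOrder (T.proj S) l
  | .leaf a => by
    intro l
    have hl : ∀ (b : α) (L : List α), IsLeafOrder (.leaf b) L ↔ L = [b] := by
      intro b L
      constructor
      · intro h; cases h; rfl
      · rintro rfl; exact .leaf b
    rw [PQTree.proj]
    by_cases ha : a ∈ S <;> simp [ha, OptOrder, hl]
  | .P cs => by
    have H : ∀ c ∈ cs, _ := fun c hc => proj_main S c
    intro l
    rw [proj_P_order]
    constructor
    · rintro ⟨L, hL, rfl⟩
      obtain ⟨cs', hp, hF⟩ := (isLeafOrder_P _ _).1 hL
      exact ⟨_, hp.filterMap _,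
        (forest_proj S cs' (fun c hc => H c (hp.subset hc)) _).1 ⟨L, hF, rfl⟩⟩
    · rintro ⟨ts, hp, hF⟩
      obtain ⟨cs', hp', rfl⟩ := exists_perm_filterMap _ _ _ hp
      obtain ⟨L, hL, rfl⟩ := (forest_proj S cs' (fun c hc => H c (hp'.subset hc)) _).2 hF
      exact ⟨L, (isLeafOrder_P _ _).2 ⟨cs', hp', hL⟩, rfl⟩
  | .Q cs => by
    have H : ∀ c ∈ cs, _ := fun c hc => proj_main S c
    intro l
    have h1 := forest_proj S cs H l
    have h2 := forest_proj S cs.reverse (fun c hc => H c (List.mem_reverse.1 hc)) l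
    rw [proj_Q_order, ← List.filterMap_reverse, ← h1, ← h2]
    simp only [isLeafOrder_Q, or_and_right, exists_or]
  termination_by T => sizeOf T
  decreasing_by all_goals (have := List.sizeOf_lt_of_mem hc; simp only [PQTree.P.sizeOf_spec, PQTree.Q.sizeOf_spec]; omega)

/-- The projection of a PQ-tree `T` to `S` represents exactly the restrictions
to `S` of the leaf-orders of `T`: a list `l` is the restriction to `S` of a
leaf-order of `T` iff it is a leaf-order of the projection (or the empty list,
if the projection is empty). -/
theorem proj_represents_restrictions {α : Type*} [DecidableEq α]
    (T : PQTree α) (hnd : T.leaves.Nodup) (S : Set α) [DecidablePred (· ∈ S)]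
    (l : List α) :
    (∃ L : List α, IsLeafOrder T L ∧ l = L.filter fun a => decide (a ∈ S)) ↔
      (match T.proj S with
        | some T' => IsLeafOrder T' l
        | none => l = []) := by
  rw [proj_main S T l]
  cases T.proj S <;> rfl
end
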